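/- For n ≥ 1, x > 0, and 0 ≤ β < 1, setting y = nx and p = 1/(1-β), the fourth Jain moment satisfies ∑_{k=0}^∞ (k/n)⁴·L_{n,k}^{(β)}(x) = (y·p⁴/n⁴)·(y³ + 6y²p + (7 + 8β)yp² + (1 + 8β + 6β²)p³). -/

import Mathlib

noncomputable def jainL (n : ℕ) (β x : ℝ) (k : ℕ) : ℝ :=
  n * x * ((n * x + k * β) ^ (k : ℕ) / (n * x + k * β)) / (Nat.factorial k) *
    Real.exp (-(n * x + k * β))

theorem HasSum.congr_fun_aux {f g : ℕ → ℝ} {V : ℝ} (h : HasSum f V) (hg : ∀ k, g k = f k) :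
    HasSum g V := by
  rwa [show g = f from funext hg]

noncomputable def jL (β : ℝ) : ℕ → ℝ → ℝ
  | 0, a => Real.exp (-a)
  | k+1, a => a * (a + (k+1) * β)^k / (Nat.factorial (k+1)) * Real.exp (-(a + (k+1) * β))

noncomputable def jq (β : ℝ) : ℝ := Real.exp ((1-β)*β) / (2 - β)

lemma exp_lt_aux {β : ℝ} (h1 : β < 1) : Real.exp ((1-β)*β) < 2 - β := by
  have h3 : 0 < 1 - (1-β)*β := by nlinarith [sq_nonneg (β - 1/2)]
  have h4 : 1 - (1-β)*β ≤ Real.exp (-((1-β)*β)) := by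
    have := Real.add_one_le_exp (-((1-β)*β)); linarith
  have h5 : Real.exp ((1-β)*β) * Real.exp (-((1-β)*β)) = 1 := by
    rw [← Real.exp_add]; simp
  have h6 := Real.exp_pos ((1-β)*β)
  have h7 : Real.exp ((1-β)*β) * (1 - (1-β)*β) ≤ 1 := by nlinarith
  have h8 : 1 < (2 - β) * (1 - (1-β)*β) := by
    have : 0 < (1-β)^3 := by apply pow_pos; linarith
    nlinarith
  by_contra hc
  push Not at hc
  nlinarith

lemma jq_pos {β : ℝ} (h1 : β < 1) : 0 < jq β := by
  unfold jq; apply div_pos (Real.exp_pos _); linarith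

lemma jq_lt {β : ℝ} (h1 : β < 1) : jq β < 1 := by
  unfold jq; rw [div_lt_one (by linarith)]; exact exp_lt_aux h1

lemma jL_nonneg {β a : ℝ} (h0 : 0 ≤ β) (ha : 0 ≤ a) (k : ℕ) : 0 ≤ jL β k a := by
  cases k <;> simp only [jL] <;> positivity

lemma jL_le {β a : ℝ} (h0 : 0 ≤ β) (h1 : β < 1) (ha : 0 ≤ a) (k : ℕ) :
    jL β k a ≤ Real.exp ((1-β)*a) * jq β ^ k := by
  cases k with
  | zero =>
    simp only [jL, pow_zero, mul_one]
    apply Real.exp_le_exp.2; nlinarith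
  | succ k =>
    simp only [jL]
    set l := a + (k+1) * β with hl
    have hl0 : 0 ≤ l := by positivity
    have hal : a ≤ l := by have : 0 ≤ (k+1) * β := by positivity
                           linarith
    have h2 : 0 < 2 - β := by linarith
    have e1 := Real.pow_div_factorial_le_exp ((2-β)*l) (by positivity) (k+1)
    have e2 : a * l^k ≤ l^(k+1) := by rw [pow_succ']; gcongr
    have hf : (0:ℝ) < (Nat.factorial (k+1)) := by positivity
    have e3 : Real.exp ((1-β)*a) * jq β ^ (k+1)
        = Real.exp ((2-β)*l) / (2-β)^(k+1) * Real.exp (-l) := by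
      unfold jq
      rw [div_pow, ← Real.exp_nat_mul, mul_div_assoc', ← Real.exp_add, div_mul_eq_mul_div,
        ← Real.exp_add]
      congr 2
      rw [hl]; push_cast; ring
    rw [e3]
    refine mul_le_mul_of_nonneg_right ?_ (Real.exp_pos _).le
    rw [le_div_iff₀ (by positivity)]
    calc a * l^k / (Nat.factorial (k+1)) * (2-β)^(k+1)
        ≤ l^(k+1) / (Nat.factorial (k+1)) * (2-β)^(k+1) := by gcongr
      _ = ((2-β)*l)^(k+1) / (Nat.factorial (k+1)) := by rw [mul_pow]; ring
      _ ≤ _ := e1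

lemma summ_q {β : ℝ} (h1 : β < 1) (j : ℕ) : Summable (fun k : ℕ => (k:ℝ)^j * jq β ^ k) := by
  apply summable_pow_mul_geometric_of_norm_lt_one
  rw [Real.norm_of_nonneg (jq_pos h1).le]; exact jq_lt h1

lemma summ_M {β a : ℝ} (h0 : 0 ≤ β) (h1 : β < 1) (ha : 0 ≤ a) (j : ℕ) :
    Summable (fun k : ℕ => (k:ℝ)^j * jL β k a) := by
  refine Summable.of_nonneg_of_le (fun k => mul_nonneg (by positivity) (jL_nonneg h0 ha k))
    (fun k => ?_) ((summ_q h1 j).mul_left (Real.exp ((1-β)*a)))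
  calc (k:ℝ)^j * jL β k a ≤ (k:ℝ)^j * (Real.exp ((1-β)*a) * jq β ^ k) := by
        gcongr; exact jL_le h0 h1 ha k
    _ = _ := by ring

noncomputable def jM (β : ℝ) (j : ℕ) (a : ℝ) : ℝ := ∑' k : ℕ, (k:ℝ)^j * jL β k a

def EB (β : ℝ) (f : ℝ → ℝ) : Prop := ∃ K : ℝ, ∀ a, 0 < a → |f a| ≤ K * Real.exp ((1-β)*a)

lemma EB.add {β : ℝ} {f g : ℝ → ℝ} (hf : EB β f) (hg : EB β g) : EB β (fun a => f a + g a) := by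
  obtain ⟨K, hK⟩ := hf
  obtain ⟨K', hK'⟩ := hg
  refine ⟨K + K', fun a ha => (abs_add_le _ _).trans ?_⟩
  have := hK a ha
  have := hK' a ha
  linarith

lemma EB.cmul {β : ℝ} {f : ℝ → ℝ} (hf : EB β f) (r : ℝ) : EB β (fun a => r * f a) := by
  obtain ⟨K, hK⟩ := hf
  refine ⟨|r| * K, fun a ha => ?_⟩
  rw [abs_mul, mul_assoc]
  exact mul_le_mul_of_nonneg_left (hK a ha) (abs_nonneg r)

lemma EB.pow {β : ℝ} (h1 : β < 1) (i : ℕ) : EB β (fun a => a^i) := by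
  refine ⟨(Nat.factorial i) / (1-β)^i, fun a ha => ?_⟩
  have h2 : 0 < 1 - β := by linarith
  have e1 := Real.pow_div_factorial_le_exp ((1-β)*a) (by positivity) i
  rw [abs_of_nonneg (by positivity)]
  rw [div_le_iff₀ (by positivity), mul_pow] at e1
  rw [div_mul_eq_mul_div, le_div_iff₀ (by positivity)]
  linarith

lemma EB_M {β : ℝ} (h0 : 0 ≤ β) (h1 : β < 1) (j : ℕ) : EB β (jM β j) := by
  refine ⟨∑' k : ℕ, (k:ℝ)^j * jq β ^ k, fun a ha => ?_⟩
  have hn : 0 ≤ jM β j a := tsum_nonneg (fun k => mul_nonneg (by positivity) (jL_nonneg h0 ha.le k))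
  rw [abs_of_nonneg hn, ← tsum_mul_right]
  refine Summable.tsum_le_tsum (fun k => ?_) (summ_M h0 h1 ha.le j) ((summ_q h1 j).mul_right _)
  calc (k:ℝ)^j * jL β k a ≤ (k:ℝ)^j * (Real.exp ((1-β)*a) * jq β ^ k) := by
        gcongr; exact jL_le h0 h1 ha.le k
    _ = _ := by ring

lemma zero_of_contr {β r : ℝ} (hr0 : 0 ≤ r) (hr : r < 1) {f : ℝ → ℝ} (hf : EB β f)
    (h : ∀ K, (∀ a, 0 < a → |f a| ≤ K * Real.exp ((1-β)*a)) →
      ∀ a, 0 < a → |f a| ≤ (K * r) * Real.exp ((1-β)*a)) :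
    ∀ a, 0 < a → f a = 0 := by
  obtain ⟨K, hK⟩ := hf
  have key : ∀ n : ℕ, ∀ a, 0 < a → |f a| ≤ (K * r^n) * Real.exp ((1-β)*a) := by
    intro n
    induction n with
    | zero => simpa using hK
    | succ n ih =>
      have := h _ ih
      intro a ha
      have := this a ha
      rw [pow_succ, ← mul_assoc]; exact this
  intro a ha
  have ht : Filter.Tendsto (fun n : ℕ => (K * r^n) * Real.exp ((1-β)*a)) Filter.atTop (nhds 0) := by
    have := ((tendsto_pow_atTop_nhds_zero_of_lt_one hr0 hr).const_mul K).mul_const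
      (Real.exp ((1-β)*a))
    simpa using this
  have := ge_of_tendsto' ht (fun n => key n a ha)
  exact abs_nonpos_iff.1 this

lemma jL_deriv_zero (β a : ℝ) : HasDerivAt (jL β 0) (- jL β 0 a) a := by
  have : HasDerivAt (fun a : ℝ => Real.exp (-a)) (Real.exp (-a) * (-1)) a :=
    (hasDerivAt_neg a).exp
  have e : jL β 0 = fun a : ℝ => Real.exp (-a) := by funext a; simp [jL]
  rw [e]; exact HasDerivAt.congr_deriv this (by ring)

lemma jL_deriv_succ (β a : ℝ) (k : ℕ) :
    HasDerivAt (jL β (k+1)) (jL β k (a+β) - jL β (k+1) a) a := by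
  have e : jL β (k+1) = fun a : ℝ => a * (a + (k+1) * β)^k / (Nat.factorial (k+1))
    * Real.exp (-(a + (k+1) * β)) := by funext a; simp [jL]
  have h1 : HasDerivAt (fun a : ℝ => a + (k+1) * β) 1 a := (hasDerivAt_id a).add_const _
  have h2 := (((hasDerivAt_id a).mul (h1.pow k)).div_const
    (Nat.factorial (k+1) : ℝ)).mul (h1.neg.exp)
  rw [e]
  refine HasDerivAt.congr_deriv h2 ?_
  cases k with
  | zero =>
    simp [jL]
    ring_nf
  | succ m =>
    have hf : ((m+1+1).factorial : ℝ) = (m+2) * ((m+1).factorial : ℝ) := by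
      rw [Nat.factorial_succ (m+1)]; push_cast; ring
    have hf0 : ((m+1).factorial : ℝ) ≠ 0 := by positivity
    have hm : (m+2 : ℝ) ≠ 0 := by positivity
    simp only [jL, Pi.mul_apply, Pi.pow_apply, Pi.neg_apply, id]
    rw [hf]
    push_cast
    have : a + β + (m+1)*β = a + (m+1+1)*β := by ring
    rw [this]
    try simp only [add_tsub_cancel_right]
    set E := Real.exp (-(a + (m+1+1)*β))
    field_simp
    ring

lemma jM_zero_deriv {β : ℝ} (h0 : 0 ≤ β) (h1 : β < 1) {a : ℝ} (ha : 0 < a) :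
    HasDerivAt (jM β 0) (jM β 0 (a+β) - jM β 0 a) a := by
  have e : jM β 0 = fun a => ∑' k, jL β k a := by funext a; simp [jM]
  have hs : ∀ b, 0 ≤ b → Summable (fun k => jL β k b) := by
    intro b hb; simpa using summ_M h0 h1 hb 0
  have hq := jq_pos h1
  let g' : ℕ → ℝ → ℝ := fun k b => match k with
    | 0 => - jL β 0 b
    | k+1 => jL β k (b+β) - jL β (k+1) b
  let R := a + 1
  let u : ℕ → ℝ := fun k => Real.exp ((1-β)*(R+β)) * (jq β)⁻¹ * jq β ^ k
    + Real.exp ((1-β)*(R+β)) * jq β ^ k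
  have hgeo : Summable (fun k => jq β ^ k) := by simpa using summ_q h1 0
  have hu : Summable u := (hgeo.mul_left _).add (hgeo.mul_left _)
  have hb : 0 < 1 - β := by linarith
  have bd : ∀ k, ∀ b, 0 ≤ b → b ≤ R + β → jL β k b ≤ Real.exp ((1-β)*(R+β)) * jq β ^ k := by
    intro k b hb0 hbR
    refine (jL_le h0 h1 hb0 k).trans ?_
    gcongr
  have main := hasDerivAt_tsum_of_isPreconnected (g := fun k => jL β k) (g' := g') (u := u)
    (t := Set.Ioo 0 R) (y₀ := a) (y := a) hu isOpen_Ioo isPreconnected_Ioo ?_ ?_ ?_ ?_ ?_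
  · rw [e]
    refine HasDerivAt.congr_deriv main ?_
    symm
    have hs1 := hs a ha.le
    have hs2 := hs (a+β) (by linarith)
    have hs3 : Summable (fun k => jL β (k+1) a) := (summable_nat_add_iff 1).2 hs1
    have hg : Summable (fun k => g' (k+1) a) := hs2.sub hs3
    have hg' : Summable (fun k => g' k a) := (summable_nat_add_iff 1).1 hg
    rw [hg'.tsum_eq_zero_add]
    change _ = -jL β 0 a + ∑' k, (jL β k (a+β) - jL β (k+1) a)
    rw [hs2.tsum_sub hs3]
    change (∑' k, jL β k (a+β)) - (∑' k, jL β k a) = _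
    rw [hs1.tsum_eq_zero_add]
    ring
  · intro k b hb
    cases k with
    | zero => exact jL_deriv_zero β b
    | succ k => exact jL_deriv_succ β b k
  · rintro k b ⟨hb0, hbR⟩
    cases k with
    | zero =>
      change ‖-jL β 0 b‖ ≤ _
      rw [norm_neg, Real.norm_of_nonneg (jL_nonneg h0 hb0.le 0)]
      have := bd 0 b hb0.le (by linarith)
      have : 0 ≤ Real.exp ((1-β)*(R+β)) * (jq β)⁻¹ * jq β ^ 0 := by positivity
      simp only [u]; linarith
    | succ k =>
      change ‖jL β k (b+β) - jL β (k+1) b‖ ≤ _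
      have e1 := bd (k+1) b hb0.le (by linarith)
      have e2 := bd k (b+β) (by linarith) (by linarith)
      have e3 : Real.exp ((1-β)*(R+β)) * (jq β)⁻¹ * jq β ^ (k+1)
        = Real.exp ((1-β)*(R+β)) * jq β ^ k := by
        rw [pow_succ]; field_simp
      have n1 := jL_nonneg h0 hb0.le (k+1)
      have n2 := jL_nonneg h0 (by linarith : 0 ≤ b+β) k
      simp only [u]
      rw [e3, Real.norm_eq_abs, abs_le]
      constructor <;> linarith
  · exact ⟨ha, by simp [R]⟩
  · exact hs a ha.le
  · exact ⟨ha, by simp [R]⟩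

lemma contr_deriv {c M b : ℝ} {f f' : ℝ → ℝ} (hc : 0 < c) (hb : 0 ≤ b)
    (hd : ∀ a, 0 < a → HasDerivAt f (f' a) a)
    (h : ∀ a, 0 < a → f' a ≤ M * Real.exp (c*a)) (a : ℝ) (ha : 0 < a) :
    f (a+b) - f a ≤ M / c * (Real.exp (c*b) - 1) * Real.exp (c*a) := by
  have hE : ∀ x, HasDerivAt (fun x => M / c * Real.exp (c*x)) (M * Real.exp (c*x)) x := by
    intro x
    have := (((hasDerivAt_id x).const_mul c).exp).const_mul (M/c)
    refine HasDerivAt.congr_deriv this ?_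
    simp only [id]; field_simp
  have anti : AntitoneOn (fun x => f x - M / c * Real.exp (c*x)) (Set.Ioi 0) := by
    have hD : ∀ x ∈ Set.Ioi (0:ℝ), HasDerivAt (fun x => f x - M / c * Real.exp (c*x))
        (f' x - M * Real.exp (c*x)) x := fun x hx => (hd x hx).sub (hE x)
    apply antitoneOn_of_deriv_nonpos (convex_Ioi 0)
    · exact fun x hx => (hD x hx).continuousAt.continuousWithinAt
    · rw [interior_Ioi]; exact fun x hx => (hD x hx).differentiableAt.differentiableWithinAt
    · rw [interior_Ioi]; intro x hx
      rw [(hD x hx).deriv]; linarith [h x hx]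
  have := anti (Set.mem_Ioi.2 ha) (Set.mem_Ioi.2 (by linarith : 0 < a + b)) (by linarith)
  simp only [mul_add, Real.exp_add] at this
  nlinarith

lemma jM_zero {β : ℝ} (h0 : 0 ≤ β) (h1 : β < 1) : ∀ a, 0 < a → jM β 0 a = 1 := by
  have hc : 0 < 1 - β := by linarith
  have hEB : EB β (fun a => jM β 0 (a+β) - jM β 0 a) := by
    obtain ⟨K, hK⟩ := EB_M h0 h1 0
    refine ⟨K * Real.exp ((1-β)*β) + K, fun a ha => ?_⟩
    have e1 := hK a ha
    have e2 := hK (a+β) (by linarith)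
    rw [mul_add, Real.exp_add] at e2
    have := abs_sub (jM β 0 (a+β)) (jM β 0 a)
    linarith
  have hd := fun a ha => jM_zero_deriv h0 h1 (a := a) ha
  have z := zero_of_contr (r := (Real.exp ((1-β)*β) - 1)/(1-β)) (by
      apply div_nonneg _ hc.le
      have := Real.add_one_le_exp ((1-β)*β)
      nlinarith) (by
      rw [div_lt_one hc]; linarith [exp_lt_aux h1]) hEB (by
      intro K hK a ha
      rw [abs_le]
      have u1 := contr_deriv hc h0 hd (fun a ha => (abs_le.1 (hK a ha)).2) a ha
      have u2 := contr_deriv (M := K) hc h0 (fun a ha => (hd a ha).neg)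
        (fun a ha => by linarith [(abs_le.1 (hK a ha)).1]) a ha
      have e : K * ((Real.exp ((1-β)*β) - 1)/(1-β)) = K / (1-β) * (Real.exp ((1-β)*β) - 1) := by
        ring
      rw [e]
      simp only [Pi.neg_apply] at u2
      constructor <;> linarith)
  -- continuity at zero
  have hcont : ContinuousOn (jM β 0) (Set.Icc 0 1) := by
    have e : jM β 0 = fun a => ∑' k, jL β k a := by funext a; simp [jM]
    rw [e]
    have hgeo : Summable (fun k => jq β ^ k) := by simpa using summ_q h1 0
    refine continuousOn_tsum (u := fun k => Real.exp ((1-β)*1) * jq β ^ k) ?_ (hgeo.mul_left _) ?_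
    · intro k x hx
      cases k with
      | zero => exact (jL_deriv_zero β x).continuousAt.continuousWithinAt
      | succ k => exact (jL_deriv_succ β x k).continuousAt.continuousWithinAt
    · rintro k x ⟨hx0, hx1⟩
      rw [Real.norm_of_nonneg (jL_nonneg h0 hx0 k)]
      refine (jL_le h0 h1 hx0 k).trans ?_
      have := (jq_pos h1).le
      gcongr
  have hzero : jM β 0 0 = 1 := by
    unfold jM
    rw [tsum_eq_single 0]
    · simp [jL]
    · intro k hk
      obtain ⟨m, rfl⟩ := Nat.exists_eq_succ_of_ne_zero hk
      simp [jL]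
  have hcont' : ContinuousOn (jM β 0) (Set.Ici 0) := by
    intro x hx
    rcases eq_or_lt_of_le (Set.mem_Ici.1 hx) with h | h
    · subst h
      have := hcont 0 (by simp)
      exact this.mono_of_mem_nhdsWithin (Icc_mem_nhdsGE (by norm_num))
    · exact (hd x h).continuousAt.continuousWithinAt
  intro a ha
  rw [← hzero]
  have hconst : ∀ b, 0 < b → jM β 0 b = jM β 0 a := by
    intro b hb
    refine (convex_Ioi (0:ℝ)).is_const_of_fderivWithin_eq_zero (𝕜 := ℝ)
      (fun x hx => (hd x hx).differentiableAt.differentiableWithinAt) (fun x hx => ?_) hb ha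
    have h := (hd x hx)
    rw [z x hx] at h
    rw [fderivWithin_of_isOpen isOpen_Ioi hx, h.hasFDerivAt.fderiv]
    ext; simp
  have t1 : Filter.Tendsto (jM β 0) (nhdsWithin 0 (Set.Ioi 0)) (nhds (jM β 0 0)) :=
    (hcont' 0 (by simp)).tendsto.mono_left (nhdsWithin_mono _ Set.Ioi_subset_Ici_self)
  have t2 : Filter.Tendsto (jM β 0) (nhdsWithin 0 (Set.Ioi 0)) (nhds (jM β 0 a)) := by
    refine tendsto_const_nhds.congr' ?_
    filter_upwards [self_mem_nhdsWithin] with b hb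
    exact (hconst b hb).symm
  exact tendsto_nhds_unique t2 t1

lemma jL_rec (β a : ℝ) (k : ℕ) :
    (a+β) * ((k+1 : ℝ) * jL β (k+1) a) = a * ((a+β+k*β) * jL β k (a+β)) := by
  cases k with
  | zero => simp [jL]; ring_nf
  | succ m =>
    have hf : ((m+1+1).factorial : ℝ) = (m+2) * ((m+1).factorial : ℝ) := by
      rw [Nat.factorial_succ (m+1)]; push_cast; ring
    have hf0 : ((m+1).factorial : ℝ) ≠ 0 := by positivity
    have hm : (m+2 : ℝ) ≠ 0 := by positivity
    simp only [jL]
    rw [hf]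
    push_cast
    have : a + β + (m+1)*β = a + (m+1+1)*β := by ring
    rw [this]
    set E := Real.exp (-(a + (m+1+1)*β))
    field_simp
    ring

lemma hasSum_M {β a : ℝ} (h0 : 0 ≤ β) (h1 : β < 1) (ha : 0 ≤ a) (j : ℕ) :
    HasSum (fun k : ℕ => (k:ℝ)^j * jL β k a) (jM β j a) := (summ_M h0 h1 ha j).hasSum

lemma jM_rec {β a V : ℝ} (h0 : 0 ≤ β) (h1 : β < 1) (ha : 0 < a) (j : ℕ)
    (hV : HasSum (fun k : ℕ => ((k:ℝ)+1)^j * (a+β+k*β) * jL β k (a+β)) V) :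
    (a+β) * jM β (j+1) a = a * V := by
  have e1 := (hasSum_M h0 h1 ha.le (j+1)).mul_left (a+β)
  have e2 := hV.mul_left a
  rw [← hasSum_nat_add_iff' 1] at e1
  simp only [Finset.sum_range_one, Nat.cast_zero, zero_pow (Nat.succ_ne_zero j), zero_mul,
    mul_zero, sub_zero] at e1
  refine e1.unique (e2.congr_fun_aux ?_)
  intro k
  have := jL_rec β a k
  push_cast
  rw [pow_succ]
  linear_combination ((k:ℝ)+1)^j * this

lemma H_zero {β : ℝ} (h0 : 0 ≤ β) (h1 : β < 1) {H : ℝ → ℝ} (hE : EB β H)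
    (hr : ∀ a, 0 < a → (a+β) * H a = β * a * H (a+β)) : ∀ a, 0 < a → H a = 0 := by
  refine zero_of_contr (r := β * Real.exp ((1-β)*β)) (by positivity) ?_ hE ?_
  · have := exp_lt_aux h1
    have : 0 < (1-β)^2 := by apply pow_pos; linarith
    nlinarith
  · intro K hK a ha
    have e := hK (a+β) (by linarith)
    rw [mul_add, Real.exp_add] at e
    have hb : 0 < a + β := by linarith
    have e2 : (a+β) * |H a| = β * a * |H (a+β)| := by
      have := congrArg abs (hr a ha)
      rwa [abs_mul, abs_mul, abs_of_pos hb, abs_of_nonneg (by positivity : 0 ≤ β * a)] at this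
    have e3 : |H a| ≤ β * |H (a+β)| := by
      have hn : 0 ≤ β * |H (a+β)| := by positivity
      have : (a+β) * |H a| ≤ (a+β) * (β * |H (a+β)|) := by
        rw [e2]; nlinarith
      exact le_of_mul_le_mul_left this hb
    calc |H a| ≤ β * |H (a+β)| := e3
      _ ≤ β * (K * (Real.exp ((1-β)*a) * Real.exp ((1-β)*β))) := by gcongr
      _ = _ := by ring

lemma M_eq {β : ℝ} (h0 : 0 ≤ β) (h1 : β < 1) (j : ℕ) (c₁ c₂ c₃ c₄ : ℝ)
    (hr : ∀ a, 0 < a → (a+β) * (jM β j a - (c₁ * a^1 + c₂ * a^2 + c₃ * a^3 + c₄ * a^4))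
      = β * a * (jM β j (a+β) - (c₁ * (a+β)^1 + c₂ * (a+β)^2 + c₃ * (a+β)^3 + c₄ * (a+β)^4))) :
    ∀ a, 0 < a → jM β j a = c₁ * a^1 + c₂ * a^2 + c₃ * a^3 + c₄ * a^4 := by
  intro a ha
  have hE : EB β (fun a => jM β j a + (-1) * (c₁ * a^1 + c₂ * a^2 + c₃ * a^3 + c₄ * a^4)) :=
    (EB_M h0 h1 j).add ((((((EB.pow h1 1).cmul c₁).add ((EB.pow h1 2).cmul c₂)).add
      ((EB.pow h1 3).cmul c₃)).add ((EB.pow h1 4).cmul c₄)).cmul (-1))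
  have := H_zero h0 h1 hE (fun a ha => by linear_combination hr a ha) a ha
  linarith

lemma M1 {β p : ℝ} (h0 : 0 ≤ β) (h1 : β < 1) (hp : p * (1 - β) = 1) :
    ∀ a, 0 < a → jM β 1 a = p * a^1 + 0 * a^2 + 0 * a^3 + 0 * a^4 := by
  refine M_eq h0 h1 1 _ _ _ _ (fun a ha => ?_)
  have hb : 0 < a + β := by linarith
  have s := fun j => hasSum_M h0 h1 hb.le j
  have e := jM_rec h0 h1 ha 0 ((((s 0).mul_left (a+β)).add ((s 1).mul_left β)).congr_fun_aux
    (fun k => by ring))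
  rw [jM_zero h0 h1 _ hb] at e
  linear_combination e - a * (a+β) * hp

lemma M2 {β p : ℝ} (h0 : 0 ≤ β) (h1 : β < 1) (hp : p * (1 - β) = 1) :
    ∀ a, 0 < a → jM β 2 a = p^3 * a^1 + p^2 * a^2 + 0 * a^3 + 0 * a^4 := by
  refine M_eq h0 h1 2 _ _ _ _ (fun a ha => ?_)
  have hb : 0 < a + β := by linarith
  have s := fun j => hasSum_M h0 h1 hb.le j
  have e := jM_rec h0 h1 ha 1 (((((s 0).mul_left (a+β)).add ((s 1).mul_left (a+β+β))).add
    ((s 2).mul_left β)).congr_fun_aux (fun k => by ring))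
  rw [jM_zero h0 h1 _ hb, M1 h0 h1 hp _ hb] at e
  have hp0 : p ≠ 0 := by rintro rfl; simp at hp
  have hbp : β = 1 - 1/p := by field_simp; linarith
  change (a+β) * jM β 2 a = _ at e
  generalize jM β 2 a = X at e ⊢
  generalize jM β 2 (a+β) = Y at e ⊢
  linear_combination (norm := skip) e
  rw [hbp]
  field_simp
  ring

lemma M3 {β p : ℝ} (h0 : 0 ≤ β) (h1 : β < 1) (hp : p * (1 - β) = 1) :
    ∀ a, 0 < a → jM β 3 a = (1+2*β)*p^5 * a^1 + 3*p^4 * a^2 + p^3 * a^3 + 0 * a^4 := by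
  refine M_eq h0 h1 3 _ _ _ _ (fun a ha => ?_)
  have hb : 0 < a + β := by linarith
  have s := fun j => hasSum_M h0 h1 hb.le j
  have e := jM_rec h0 h1 ha 2 ((((((s 0).mul_left (a+β)).add ((s 1).mul_left (2*(a+β)+β))).add
    ((s 2).mul_left (a+β+2*β))).add ((s 3).mul_left β)).congr_fun_aux (fun k => by ring))
  rw [jM_zero h0 h1 _ hb, M1 h0 h1 hp _ hb, M2 h0 h1 hp _ hb] at e
  have hp0 : p ≠ 0 := by rintro rfl; simp at hp
  have hbp : β = 1 - 1/p := by field_simp; linarith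
  change (a+β) * jM β 3 a = _ at e
  generalize jM β 3 a = X at e ⊢
  generalize jM β 3 (a+β) = Y at e ⊢
  linear_combination (norm := skip) e
  rw [hbp]
  field_simp
  ring

lemma M4 {β p : ℝ} (h0 : 0 ≤ β) (h1 : β < 1) (hp : p * (1 - β) = 1) :
    ∀ a, 0 < a → jM β 4 a
      = (1+8*β+6*β^2)*p^7 * a^1 + (7+8*β)*p^6 * a^2 + 6*p^5 * a^3 + p^4 * a^4 := by
  refine M_eq h0 h1 4 _ _ _ _ (fun a ha => ?_)
  have hb : 0 < a + β := by linarith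
  have s := fun j => hasSum_M h0 h1 hb.le j
  have e := jM_rec h0 h1 ha 3 (((((((s 0).mul_left (a+β)).add ((s 1).mul_left (3*(a+β)+β))).add
    ((s 2).mul_left (3*(a+β)+3*β))).add ((s 3).mul_left (a+β+3*β))).add
    ((s 4).mul_left β)).congr_fun_aux (fun k => by ring))
  rw [jM_zero h0 h1 _ hb, M1 h0 h1 hp _ hb, M2 h0 h1 hp _ hb, M3 h0 h1 hp _ hb] at e
  have hp0 : p ≠ 0 := by rintro rfl; simp at hp
  have hbp : β = 1 - 1/p := by field_simp; linarith
  change (a+β) * jM β 4 a = _ at e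
  generalize jM β 4 a = X at e ⊢
  generalize jM β 4 (a+β) = Y at e ⊢
  linear_combination (norm := skip) e
  rw [hbp]
  field_simp
  ring

theorem jain_fourth_moment (n : ℕ) (hn : 1 ≤ n) (x β : ℝ)
    (hx : 0 < x) (hβ0 : 0 ≤ β) (hβ1 : β < 1)
    (y p : ℝ) (hy : y = n * x) (hp : p = 1 / (1 - β)) :
    HasSum (fun k : ℕ => (k / n : ℝ) ^ 4 * jainL n β x k)
      (y * p ^ 4 / (n : ℝ) ^ 4 *
        (y ^ 3 + 6 * y ^ 2 * p + (7 + 8 * β) * y * p ^ 2 +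
          (1 + 8 * β + 6 * β ^ 2) * p ^ 3)) := by
  have hn0 : (0:ℝ) < n := by exact_mod_cast hn
  have hy0 : 0 < y := by rw [hy]; positivity
  have hp' : p * (1 - β) = 1 := by
    have : 1 - β ≠ 0 := by linarith
    rw [hp]; field_simp
  have hL : ∀ k, jainL n β x k = jL β k y := by
    intro k
    unfold jainL
    rw [← hy]
    cases k with
    | zero => simp [jL]; field_simp
    | succ k =>
      have : y + ((k+1 : ℕ):ℝ) * β ≠ 0 := by positivity
      rw [pow_succ, mul_div_cancel_right₀ _ this]
      simp only [jL]; push_cast; ring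
  have h := (hasSum_M hβ0 hβ1 hy0.le 4).mul_left (1 / (n:ℝ)^4)
  rw [M4 hβ0 hβ1 hp' y hy0] at h
  have h' := HasSum.congr_fun_aux (g := fun k : ℕ => (k / n : ℝ) ^ 4 * jainL n β x k) h
    (fun k => by rw [hL, div_pow]; ring)
  refine Eq.subst (motive := fun V => HasSum _ V) ?_ h'
  ring
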